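/- arXiv:1712.09069 — 2 statements merged into one kernel-verified Lean document; each statement's English description precedes it below -/
import Mathlib

section
/- Let $(X,\mu)$ be a measure space with finite measure, let $q > 2$ be a real number, let $f, \psi, h : X \to \mathbb{R}$ be bounded measurable functions with $f \geq 0$, and let $\gamma > 0$ be a real number with $\int_X f\,|h|^q \, d\mu < \gamma$. If $t_0 \in \mathbb{R}$, $t_0 \neq 0$, satisfies $\int_X f\,|t_0\psi + h|^q \, d\mu = \gamma$, then $t_0 \int_X f\,|t_0\psi + h|^{q-2}(t_0\psi + h)\,\psi \, d\mu > 0$; in particular $\int_X f\,|t_0\psi + h|^{q-2}(t_0\psi + h)\,\psi \, d\mu \neq 0.$ -/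
/-!
With `v = t₀ ψ + h`, convexity of `s ↦ |s| ^ q` gives the tangent-line inequality
`|v| ^ q - |h| ^ q ≤ q |v| ^ (q - 2) v (v - h)` pointwise (`abs_rpow_sub_le`, a form of Young's
inequality). Since `v - h = t₀ ψ`, multiplying by `f ≥ 0` and integrating yields
`0 < γ - ∫ f |h| ^ q ≤ q t₀ ∫ f |v| ^ (q - 2) v ψ`. All integrands are bounded and measurable on
a finite measure space, hence integrable.
-/

open MeasureTheory

/-- Tangent-line inequality for the convex function `s ↦ |s| ^ q`, taken at `v`. -/
lemma abs_rpow_sub_le {q : ℝ} (hq : 2 < q) (v b : ℝ) :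
    |v| ^ q - |b| ^ q ≤ q * (|v| ^ (q - 2) * v * (v - b)) := by
  have hq0 : 0 < q := by linarith
  have hv := abs_nonneg v
  have hb := abs_nonneg b
  -- Weighted AM-GM with weights `(q - 1) / q` and `1 / q`.
  have young := Real.geom_mean_le_arith_mean2_weighted (w₁ := (q - 1) / q) (w₂ := 1 / q)
    (p₁ := |v| ^ q) (p₂ := |b| ^ q) (div_nonneg (by linarith) hq0.le) (by positivity)
    (by positivity) (by positivity) (by field_simp; ring)
  rw [← Real.rpow_mul hv, ← Real.rpow_mul hb, mul_div_cancel₀ _ hq0.ne',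
    mul_div_cancel₀ _ hq0.ne', Real.rpow_one] at young
  have young' : q * (|v| ^ (q - 1) * |b|) ≤ (q - 1) * |v| ^ q + |b| ^ q := by
    calc q * (|v| ^ (q - 1) * |b|) ≤ q * ((q - 1) / q * |v| ^ q + 1 / q * |b| ^ q) := by gcongr
      _ = _ := by field_simp
  have e1 : |v| ^ (q - 1) = |v| ^ (q - 2) * |v| := by
    rw [← Real.rpow_add_one' hv (by linarith)]; congr 1; ring
  have e2 : |v| ^ q = |v| ^ (q - 2) * (v * v) := by
    rw [← abs_mul_abs_self v, ← mul_assoc, ← e1, ← Real.rpow_add_one' hv (by linarith)]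
    congr 1; ring
  have hvb : |v| ^ (q - 2) * (v * b) ≤ |v| ^ (q - 1) * |b| := by
    rw [e1, mul_assoc, ← abs_mul]
    gcongr
    exact le_abs_self _
  have := mul_le_mul_of_nonneg_left hvb hq0.le
  have e3 : q * (|v| ^ (q - 2) * v * (v - b)) = q * |v| ^ q - q * (|v| ^ (q - 2) * (v * b)) := by
    rw [e2]; ring
  linarith

lemma integrable_mul_abs_rpow {X : Type*} [MeasurableSpace X] (μ : Measure X) [IsFiniteMeasure μ]
    {p C D : ℝ} (hp : 0 ≤ p) {g u : X → ℝ} (hg : Measurable g) (hu : Measurable u)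
    (hgC : ∀ x, |g x| ≤ C) (huD : ∀ x, |u x| ≤ D) :
    Integrable (fun x => g x * |u x| ^ p) μ := by
  refine Integrable.of_bound (C := C * D ^ p) ?_ (Filter.Eventually.of_forall fun x => ?_)
  · exact (hg.mul ((measurable_norm.comp hu).pow_const p)).aestronglyMeasurable
  · have hC : 0 ≤ C := (abs_nonneg _).trans (hgC x)
    rw [Real.norm_eq_abs, abs_mul, abs_of_nonneg (Real.rpow_nonneg (abs_nonneg (u x)) p)]
    gcongr
    · exact hgC x
    · exact huD x

theorem stmt_4
    {X : Type*} [MeasurableSpace X] (μ : Measure X) [IsFiniteMeasure μ]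
    (q : ℝ) (hq : 2 < q)
    (f ψ h : X → ℝ)
    (hf_meas : Measurable f) (hψ_meas : Measurable ψ) (hh_meas : Measurable h)
    (hf_bdd : ∃ C : ℝ, ∀ x, |f x| ≤ C)
    (hψ_bdd : ∃ C : ℝ, ∀ x, |ψ x| ≤ C)
    (hh_bdd : ∃ C : ℝ, ∀ x, |h x| ≤ C)
    (hf_nonneg : ∀ x, 0 ≤ f x)
    (γ : ℝ) (hγ_pos : 0 < γ)
    (hh_lt : ∫ x, f x * |h x| ^ q ∂μ < γ)
    (t₀ : ℝ) (ht₀ : t₀ ≠ 0)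
    (ht₀_eq : ∫ x, f x * |t₀ * ψ x + h x| ^ q ∂μ = γ) :
    0 < t₀ * ∫ x, f x * (|t₀ * ψ x + h x| ^ (q - 2) * (t₀ * ψ x + h x)) * ψ x ∂μ ∧
      ∫ x, f x * (|t₀ * ψ x + h x| ^ (q - 2) * (t₀ * ψ x + h x)) * ψ x ∂μ ≠ 0 := by
  obtain ⟨A, hA⟩ := hf_bdd
  obtain ⟨B, hB⟩ := hψ_bdd
  obtain ⟨C, hC⟩ := hh_bdd
  have hv_meas : Measurable fun x => t₀ * ψ x + h x := (hψ_meas.const_mul t₀).add hh_meas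
  have hv : ∀ x, |t₀ * ψ x + h x| ≤ |t₀| * B + C := fun x => by
    refine (abs_add_le _ _).trans (add_le_add ?_ (hC x))
    rw [abs_mul]
    gcongr
    exact hB x
  have i1 := integrable_mul_abs_rpow μ (p := q) (by linarith) hf_meas hv_meas hA hv
  have i2 := integrable_mul_abs_rpow μ (p := q) (by linarith) hf_meas hh_meas hA hC
  have i3 : Integrable
      (fun x => f x * (|t₀ * ψ x + h x| ^ (q - 2) * (t₀ * ψ x + h x)) * ψ x) μ := by
    have := integrable_mul_abs_rpow μ (p := q - 2) (C := A * (|t₀| * B + C) * B) (by linarith)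
      ((hf_meas.mul hv_meas).mul hψ_meas) hv_meas (fun x => by
        have hA0 : 0 ≤ A := (abs_nonneg _).trans (hA x)
        have hv0 : 0 ≤ |t₀| * B + C := (abs_nonneg _).trans (hv x)
        simp only [Pi.mul_apply, abs_mul]
        gcongr
        exacts [hA x, hv x, hB x]) hv
    refine this.congr (Filter.Eventually.of_forall fun x => ?_)
    simp only [Pi.mul_apply]
    ring
  have key : ∫ x, (f x * |t₀ * ψ x + h x| ^ q - f x * |h x| ^ q) ∂μ ≤
      ∫ x, (q * t₀) * (f x * (|t₀ * ψ x + h x| ^ (q - 2) * (t₀ * ψ x + h x)) * ψ x) ∂μ := by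
    refine integral_mono (i1.sub i2) (i3.const_mul _) fun x => ?_
    have := mul_le_mul_of_nonneg_left (abs_rpow_sub_le hq (t₀ * ψ x + h x) (h x)) (hf_nonneg x)
    rw [add_sub_cancel_right] at this
    linarith
  rw [integral_sub i1 i2, ht₀_eq, integral_const_mul, mul_assoc] at key
  have pos := pos_of_mul_pos_right ((sub_pos.2 hh_lt).trans_le key) (by linarith : (0 : ℝ) ≤ q)
  exact ⟨pos, right_ne_zero_of_mul pos.ne'⟩
end

section
/- Let $n$ and $k$ be positive integers with $n > 2k$, let $\eta : \mathbb{R}^n \to \mathbb{R}$ be a smooth compactly supported function, and for $\epsilon > 0$ define $u_\epsilon : \mathbb{R}^n \to \mathbb{R}$ by $u_\epsilon(x) = \eta(x)\left( \frac{\epsilon}{\epsilon^2 + |x|^2} \right)^{(n-2k)/2}$. Then for every integer $l$ with $0 \leq l \leq k-1$, $\lim_{\epsilon \to 0^+} \int_{\mathbb{R}^n} \| D^l u_\epsilon(x) \|^2 \, dx = 0,$ where $D^l u_\epsilon$ denotes the $l$-th total (Fréchet) derivative of $u_\epsilon$ and $\| \cdot \|$ its norm as a multilinear map. -/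
open MeasureTheory Filter

/-!
Put `m = n - 2k ≥ 1` and `ρ = (ε² + |x|²)^{1/2}`, so that the bubble is `ε^{m/2} ρ^{-m}`.
Now `ρ` is the Euclidean norm of the point `(ε, x)` of `ℝ × ℝⁿ`, so the bubble is, up to the factor
`ε^{m/2}`, the slice at height `ε` of the single function `z ↦ ‖z‖^{-m}`.  That function is smooth
off the origin and homogeneous of degree `-m`; hence its `j`-th derivative is homogeneous of degree
`-m-j`, and compactness of the unit sphere gives `‖D^j ‖z‖^{-m}‖ ≤ C ‖z‖^{-m-j}`
(`exists_norm_iteratedFDeriv_invPow_le`).  Restricting to the slice gives the same bound for the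
bubble, uniformly in `ε` (`exists_slice_bound`).

By the Leibniz rule, and because `ρ` is bounded on the support of `η`,
`‖D^l u_ε‖² ≤ C ε^m ρ^{-2m-2l}`.  As `ε ≤ ρ` and `m ≥ 1`, this is at most `C ε ρ^{-(m+2l+1)}`, and
`m + 2l + 1 ≤ n - 1` because `l ≤ k - 1`, so it is at most `C' ε |x|^{-(n-1)}`
(`exists_pointwise_bound`).  The function `|x|^{-(n-1)}` is integrable on balls of `ℝⁿ`
(`integrable_indicator_invPow`), so the integral is `O(ε)`.
-/

/-- Chain rule for iterated derivatives along an affine map `y ↦ v + L y`, for a function which is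
smooth only on an open set. -/
lemma iteratedFDeriv_comp_affine {E F : Type*} [NormedAddCommGroup E] [NormedSpace ℝ E]
    [NormedAddCommGroup F] [NormedSpace ℝ F] {f : F → ℝ} {s : Set F} (hs : IsOpen s)
    (hf : ContDiffOn ℝ (⊤ : ℕ∞) f s) (v : F) (L : E →L[ℝ] F) (x : E) (hx : v + L x ∈ s) (j : ℕ) :
    iteratedFDeriv ℝ j (fun y => f (v + L y)) x =
      (iteratedFDeriv ℝ j f (v + L x)).compContinuousLinearMap fun _ => L := by
  set g : F → ℝ := fun z => f (v + z)
  set t : Set F := (fun z => v + z) ⁻¹' s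
  have ht : IsOpen t := hs.preimage (by fun_prop)
  have hg : ContDiffOn ℝ (⊤ : ℕ∞) g t :=
    hf.comp (by fun_prop) (fun z hz => hz)
  have hLt : IsOpen (L ⁻¹' t) := ht.preimage L.continuous
  have h := L.iteratedFDerivWithin_comp_right hg ht.uniqueDiffOn hLt.uniqueDiffOn
    (x := x) hx (i := j) (mod_cast le_top)
  rw [iteratedFDerivWithin_of_isOpen j hLt hx,
    iteratedFDerivWithin_of_isOpen j ht (show L x ∈ t from hx)] at h
  rw [show (fun y => f (v + L y)) = g ∘ L from rfl, h, iteratedFDeriv_comp_add_left]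

lemma contDiffOn_invPow {F : Type*} [NormedAddCommGroup F] [InnerProductSpace ℝ F] (m : ℕ) :
    ContDiffOn ℝ (⊤ : ℕ∞) (fun z : F => (‖z‖ ^ m)⁻¹) {0}ᶜ := by
  intro z hz
  have hz : z ≠ 0 := hz
  exact (((contDiffAt_norm ℝ hz).pow m).inv (by positivity)).contDiffWithinAt

/-- The derivatives of the homogeneous function `‖z‖^{-m}` decay like those of a homogeneous
function: they are bounded on the unit sphere by compactness, and elsewhere by scaling. -/
lemma exists_norm_iteratedFDeriv_invPow_le {F : Type*} [NormedAddCommGroup F]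
    [InnerProductSpace ℝ F] [FiniteDimensional ℝ F] (m j : ℕ) :
    ∃ C : ℝ, 0 ≤ C ∧ ∀ z : F, z ≠ 0 →
      ‖iteratedFDeriv ℝ j (fun z : F => (‖z‖ ^ m)⁻¹) z‖ ≤ C * (‖z‖ ^ (m + j))⁻¹ := by
  set f : F → ℝ := fun z => (‖z‖ ^ m)⁻¹ with hfdef
  have ho : IsOpen ({0}ᶜ : Set F) := isOpen_compl_singleton
  have hf : ContDiffOn ℝ (⊤ : ℕ∞) f {0}ᶜ := contDiffOn_invPow m
  have hcont : ContinuousOn (iteratedFDeriv ℝ j f) {0}ᶜ :=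
    (hf.continuousOn_iteratedFDerivWithin (m := j) (mod_cast le_top) ho.uniqueDiffOn).congr
      fun z hz => (iteratedFDerivWithin_of_isOpen j ho hz).symm
  have hsub : Metric.sphere (0 : F) 1 ⊆ {0}ᶜ := by
    rintro z hz rfl
    simp at hz
  obtain ⟨C, hC⟩ := (isCompact_sphere (0 : F) 1).exists_bound_of_continuousOn (hcont.mono hsub)
  refine ⟨max C 0, le_max_right _ _, fun z hz => ?_⟩
  set c := ‖z‖ with hc
  have hcpos : 0 < c := norm_pos_iff.2 hz
  set L : F →L[ℝ] F := c⁻¹ • ContinuousLinearMap.id ℝ F with hL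
  have hLz : (0 : F) + L z ∈ Metric.sphere (0 : F) 1 := by
    simp [hL, norm_smul, abs_of_pos hcpos, ← hc, hcpos.ne']
  -- homogeneity of degree `-m`
  have hhom : f = fun y => (c ^ m)⁻¹ • f (0 + L y) := by
    funext y
    simp only [hfdef, hL, zero_add, _root_.smul_apply, ContinuousLinearMap.id_apply,
      norm_smul, norm_inv, Real.norm_eq_abs, abs_of_pos hcpos, smul_eq_mul, ← mul_inv, ← mul_pow]
    rw [mul_inv_cancel_left₀ hcpos.ne']
  have hcomp : ContDiffAt ℝ j (fun y => f (0 + L y)) z := by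
    have h1 : ContDiffAt ℝ j f (0 + L z) :=
      (hf.contDiffAt (ho.mem_nhds (hsub hLz))).of_le (mod_cast le_top)
    exact ContDiffAt.comp (g := f) (f := fun y => 0 + L y) z h1 (by fun_prop)
  have hLn : ‖L‖ ≤ c⁻¹ := by
    rw [hL, norm_smul, Real.norm_of_nonneg (by positivity)]
    exact mul_le_of_le_one_right (by positivity) ContinuousLinearMap.norm_id_le
  rw [hhom, iteratedFDeriv_const_smul_apply' hcomp,
    iteratedFDeriv_comp_affine ho hf 0 L z (hsub hLz) j, norm_smul,
    Real.norm_of_nonneg (by positivity)]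
  calc (c ^ m)⁻¹ * ‖(iteratedFDeriv ℝ j f (0 + L z)).compContinuousLinearMap fun _ => L‖
      ≤ (c ^ m)⁻¹ * (max C 0 * (c⁻¹) ^ j) := by
        gcongr
        refine (ContinuousMultilinearMap.norm_compContinuousLinearMap_le _ _).trans ?_
        rw [Finset.prod_const, Finset.card_univ, Fintype.card_fin]
        gcongr
        exact (hC _ hLz).trans (le_max_left _ _)
    _ = max C 0 * (c ^ (m + j))⁻¹ := by
        rw [pow_add, mul_inv, inv_pow]; ring

lemma norm_toLp_pair {E : Type*} [NormedAddCommGroup E] (ε : ℝ) (x : E) :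
    ‖(WithLp.toLp 2 (ε, x) : WithLp 2 (ℝ × E))‖ = √(ε ^ 2 + ‖x‖ ^ 2) := by
  rw [WithLp.prod_norm_eq_of_L2]
  simp

/-- Smoothness and uniform derivative bounds for the slices `x ↦ (ε² + |x|²)^{-m/2}`. -/
lemma exists_slice_bound {E : Type*} [NormedAddCommGroup E] [InnerProductSpace ℝ E]
    [FiniteDimensional ℝ E] (m j : ℕ) :
    ∃ C : ℝ, 0 ≤ C ∧ ∀ ε : ℝ, 0 < ε →
      ContDiff ℝ (⊤ : ℕ∞) (fun y : E => (√(ε ^ 2 + ‖y‖ ^ 2) ^ m)⁻¹) ∧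
      ∀ x : E, ‖iteratedFDeriv ℝ j (fun y : E => (√(ε ^ 2 + ‖y‖ ^ 2) ^ m)⁻¹) x‖ ≤
        C * (√(ε ^ 2 + ‖x‖ ^ 2) ^ (m + j))⁻¹ := by
  obtain ⟨C, hC0, hC⟩ := exists_norm_iteratedFDeriv_invPow_le (F := WithLp 2 (ℝ × E)) m j
  refine ⟨C, hC0, fun ε hε => ⟨?_, fun x => ?_⟩⟩
  · have hpos : ∀ y : E, 0 < ε ^ 2 + ‖y‖ ^ 2 := fun y => by positivity
    refine ContDiff.inv (ContDiff.pow (ContDiff.sqrt ?_ fun y => (hpos y).ne') m) fun y => ?_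
    · exact contDiff_const.add (contDiff_norm_sq ℝ)
    · exact (pow_pos (Real.sqrt_pos.2 (hpos y)) m).ne'
  · set v : WithLp 2 (ℝ × E) := WithLp.toLp 2 (ε, 0)
    set L : E →L[ℝ] WithLp 2 (ℝ × E) :=
      (LinearMap.mkContinuous
        ((WithLp.linearEquiv 2 ℝ (ℝ × E)).symm.toLinearMap ∘ₗ LinearMap.inr ℝ ℝ E) 1
        (fun y => by simp)) with hL
    have hvL : ∀ y : E, v + L y = WithLp.toLp 2 (ε, y) := fun y => by
      simp [v, hL, ← WithLp.toLp_add]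
    have hLn : ‖L‖ ≤ 1 := LinearMap.mkContinuous_norm_le _ zero_le_one _
    have hpos : 0 < √(ε ^ 2 + ‖x‖ ^ 2) := Real.sqrt_pos.2 (by positivity)
    have hne : v + L x ≠ 0 := by
      rw [← norm_pos_iff, hvL, norm_toLp_pair]
      exact hpos
    have hfun : (fun y : E => (√(ε ^ 2 + ‖y‖ ^ 2) ^ m)⁻¹) =
        fun y => (fun z : WithLp 2 (ℝ × E) => (‖z‖ ^ m)⁻¹) (v + L y) := by
      funext y
      simp only [hvL, norm_toLp_pair]
    have hb := hC _ hne
    rw [hfun, iteratedFDeriv_comp_affine isOpen_compl_singleton (contDiffOn_invPow m) v L x hne j]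
    refine (ContinuousMultilinearMap.norm_compContinuousLinearMap_le _ _).trans ?_
    rw [Finset.prod_const, Finset.card_univ, Fintype.card_fin]
    refine (mul_le_of_le_one_right (norm_nonneg _) (pow_le_one₀ (norm_nonneg _) hLn)).trans ?_
    rwa [hvL, norm_toLp_pair, ← hvL] at hb

/-- `|x|^{-(n-1)}` is integrable on balls of `ℝⁿ`: in polar coordinates the weight cancels the
singularity. -/
lemma integrable_indicator_invPow (n : ℕ) (hn : 0 < n) (R : ℝ) :
    Integrable (fun x : EuclideanSpace ℝ (Fin n) =>
      (Set.Iio R).indicator (fun r : ℝ => (r ^ (n - 1))⁻¹) ‖x‖) := by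
  have : Nonempty (Fin n) := ⟨⟨0, hn⟩⟩
  rw [integrable_fun_norm_addHaar volume, finrank_euclideanSpace_fin]
  have h : IntegrableOn ((Set.Iio R).indicator (fun _ : ℝ => (1 : ℝ))) (Set.Ioi 0) := by
    rw [IntegrableOn, integrable_indicator_iff measurableSet_Iio, IntegrableOn,
      Measure.restrict_restrict measurableSet_Iio, Set.Iio_inter_Ioi]
    exact integrableOn_const (by simp)
  refine h.congr_fun (fun y hy => ?_) measurableSet_Ioi
  have hy : 0 < y := hy
  by_cases hyR : y < R
  · simp [Set.indicator, hyR, hy.ne']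
  · simp [Set.indicator, hyR]

/-- The powers of `ε` and `ρ` compared: with `ε ≤ ρ ≤ M`, one factor of `ε` survives and the
remaining singularity is of order `N`. -/
lemma power_comparison {ε ρ r M : ℝ} {m l N : ℕ} (hε : 0 < ε) (hr : 0 < r) (hερ : ε ≤ ρ)
    (hrρ : r ≤ ρ) (hρM : ρ ≤ M) (hm : 1 ≤ m) (hN : m + 2 * l + 1 ≤ N) :
    ε ^ m * ((ρ ^ (m + l))⁻¹) ^ 2 ≤ M ^ (N - (m + 2 * l + 1)) * ε * (r ^ N)⁻¹ := by
  have hρ : 0 < ρ := hr.trans_le hrρ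
  have hM : 0 < M := hρ.trans_le hρM
  obtain ⟨q, rfl⟩ := Nat.exists_eq_add_of_le hN
  obtain ⟨p, rfl⟩ := Nat.exists_eq_add_of_le' hm
  rw [Nat.add_sub_cancel_left]
  calc ε ^ (p + 1) * ((ρ ^ (p + 1 + l))⁻¹) ^ 2
      = ε ^ p * ε * ((ρ ^ (p + 1 + l))⁻¹) ^ 2 := by rw [pow_succ]
    _ ≤ ρ ^ p * ε * ((ρ ^ (p + 1 + l))⁻¹) ^ 2 := by gcongr
    _ = ρ ^ q * ε * (ρ ^ (p + 1 + 2 * l + 1 + q))⁻¹ := by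
        field_simp
        ring
    _ ≤ M ^ q * ε * (r ^ (p + 1 + 2 * l + 1 + q))⁻¹ := by gcongr

/-- The pointwise estimate `‖D^l u_ε‖² ≤ A ε |x|^{-(n-1)}`, supported in a fixed ball. -/
lemma exists_pointwise_bound (n k : ℕ) (hk : 0 < k) (hnk : 2 * k < n)
    (η : EuclideanSpace ℝ (Fin n) → ℝ)
    (hη_smooth : ContDiff ℝ (⊤ : ℕ∞) η) (hη_supp : HasCompactSupport η)
    (l : ℕ) (hl : l ≤ k - 1) :
    ∃ A R : ℝ, ∀ ε : ℝ, 0 < ε → ε ≤ 1 → ∀ x : EuclideanSpace ℝ (Fin n), x ≠ 0 →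
      ‖iteratedFDeriv ℝ l
        (fun y : EuclideanSpace ℝ (Fin n) =>
          η y * (ε / (ε ^ 2 + ‖y‖ ^ 2)) ^ (((n : ℝ) - 2 * k) / 2)) x‖ ^ 2 ≤
      A * ε * (Set.Iio R).indicator (fun r : ℝ => (r ^ (n - 1))⁻¹) ‖x‖ := by
  obtain ⟨m, hm⟩ := Nat.exists_eq_add_of_lt hnk
  obtain ⟨R, hR⟩ := hη_supp.isCompact.isBounded.subset_ball 0
  choose C hC0 hC using fun j => exists_slice_bound (E := EuclideanSpace ℝ (Fin n)) (m + 1) j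
  have hB : ∀ i : ℕ, ∃ B : ℝ, ∀ x, ‖iteratedFDeriv ℝ i η x‖ ≤ B := fun i =>
    (hη_smooth.continuous_iteratedFDeriv (m := i) (mod_cast le_top)).bounded_above_of_compact_support
      (hη_supp.iteratedFDeriv i)
  choose B hB using hB
  have hB0 : ∀ i, 0 ≤ B i := fun i => (norm_nonneg _).trans (hB i 0)
  set M : ℝ := 1 + |R| with hM
  have hM1 : 1 ≤ M := by simp [hM]
  set D : ℝ := ∑ i ∈ Finset.range (l + 1), (l.choose i : ℝ) * B i * (C (l - i) * M ^ i) with hD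
  refine ⟨D ^ 2 * M ^ (n - 1 - (m + 1 + 2 * l + 1)), R, fun ε hε hε1 x hx => ?_⟩
  set a : ℝ := ((n : ℝ) - 2 * k) / 2 with ha
  have ham : a * 2 = ((m + 1 : ℕ) : ℝ) := by
    rw [ha, hm]; push_cast; ring
  -- the bubble as a multiple of the slice of the homogeneous function
  have hfun : (fun y : EuclideanSpace ℝ (Fin n) => η y * (ε / (ε ^ 2 + ‖y‖ ^ 2)) ^ a) =
      fun y => ε ^ a • (η y * (√(ε ^ 2 + ‖y‖ ^ 2) ^ (m + 1))⁻¹) := by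
    funext y
    have hpos : 0 < ε ^ 2 + ‖y‖ ^ 2 := by positivity
    rw [Real.div_rpow hε.le hpos.le, smul_eq_mul, ← Real.rpow_natCast (√_), ← ham,
      Real.sqrt_eq_rpow, ← Real.rpow_mul hpos.le, show 1 / 2 * (a * 2) = a by ring]
    ring
  by_cases hxs : x ∈ tsupport η
  swap
  · have hzero : iteratedFDeriv ℝ l
        (fun y : EuclideanSpace ℝ (Fin n) => η y * (ε / (ε ^ 2 + ‖y‖ ^ 2)) ^ a) x = 0 := by
      by_contra hne
      exact hxs (closure_mono (Function.support_mul_subset_left _ _)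
        (support_iteratedFDeriv_subset l hne))
    rw [hzero, norm_zero, zero_pow two_ne_zero]
    have hD0 : 0 ≤ (Set.Iio R).indicator (fun r : ℝ => (r ^ (n - 1))⁻¹) ‖x‖ := by
      by_cases h : ‖x‖ < R
      · simp [Set.indicator, h]
      · simp [Set.indicator, h]
    positivity
  have hxR : ‖x‖ < R := by simpa using hR hxs
  set ρ : ℝ := √(ε ^ 2 + ‖x‖ ^ 2) with hρdef
  have hxpos : 0 < ‖x‖ := norm_pos_iff.2 hx
  have hερ : ε ≤ ρ := Real.le_sqrt_of_sq_le (by nlinarith)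
  have hrρ : ‖x‖ ≤ ρ := Real.le_sqrt_of_sq_le (by nlinarith)
  have hρ : 0 < ρ := hε.trans_le hερ
  have hρM : ρ ≤ M := by
    refine Real.sqrt_le_iff.2 ⟨by positivity, ?_⟩
    have := le_abs_self R
    have h1 : ‖x‖ ≤ |R| := hxR.le.trans this
    rw [hM]
    nlinarith
  have hsm := fun j => (hC j ε hε).1
  have hprod : ContDiff ℝ (⊤ : ℕ∞) (fun y : EuclideanSpace ℝ (Fin n) =>
      η y * (√(ε ^ 2 + ‖y‖ ^ 2) ^ (m + 1))⁻¹) := hη_smooth.mul (hsm 0)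
  -- Leibniz rule; lower order derivatives of the slice are absorbed using `ρ ≤ M`
  have hLeib : ‖iteratedFDeriv ℝ l (fun y : EuclideanSpace ℝ (Fin n) =>
      η y * (√(ε ^ 2 + ‖y‖ ^ 2) ^ (m + 1))⁻¹) x‖ ≤ D * (ρ ^ (m + 1 + l))⁻¹ := by
    refine (norm_iteratedFDeriv_mul_le hη_smooth (hsm 0) x (mod_cast le_top)).trans ?_
    rw [hD, Finset.sum_mul]
    refine Finset.sum_le_sum fun i hi => ?_
    have hil : i ≤ l := Nat.lt_succ_iff.1 (Finset.mem_range.1 hi)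
    have hpow : (ρ ^ (m + 1 + (l - i)))⁻¹ ≤ M ^ i * (ρ ^ (m + 1 + l))⁻¹ := by
      have : (ρ ^ (m + 1 + (l - i)))⁻¹ = ρ ^ i * (ρ ^ (m + 1 + l))⁻¹ := by
        rw [show m + 1 + l = i + (m + 1 + (l - i)) by omega, pow_add ρ i, mul_inv,
          mul_inv_cancel_left₀ (by positivity)]
      rw [this]
      gcongr
    rw [mul_assoc _ (C (l - i) * M ^ i), mul_assoc (C (l - i))]
    have hCi := hC0 (l - i)
    have hBi := hB0 i
    refine mul_le_mul (mul_le_mul_of_nonneg_left (hB i x) (by positivity)) ?_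
      (norm_nonneg _) (by positivity)
    exact ((hC (l - i) ε hε).2 x).trans (mul_le_mul_of_nonneg_left hpow hCi)
  have hpc := power_comparison (l := l) (m := m + 1) (N := n - 1) hε hxpos hερ hrρ hρM
    (by omega) (by omega)
  have hεa : (ε ^ a) ^ 2 = ε ^ (m + 1) := by
    rw [← Real.rpow_natCast, ← Real.rpow_mul hε.le, ← Real.rpow_natCast, ← ham]
    norm_num
  rw [hfun, iteratedFDeriv_const_smul_apply' (hprod.contDiffAt.of_le (mod_cast le_top)), norm_smul,
    Real.norm_of_nonneg (by positivity), mul_pow, hεa,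
    Set.indicator_of_mem (show ‖x‖ ∈ Set.Iio R from hxR)]
  calc ε ^ (m + 1) * ‖iteratedFDeriv ℝ l (fun y : EuclideanSpace ℝ (Fin n) =>
        η y * (√(ε ^ 2 + ‖y‖ ^ 2) ^ (m + 1))⁻¹) x‖ ^ 2
      ≤ ε ^ (m + 1) * (D * (ρ ^ (m + 1 + l))⁻¹) ^ 2 := by gcongr
    _ = D ^ 2 * (ε ^ (m + 1) * ((ρ ^ (m + 1 + l))⁻¹) ^ 2) := by ring
    _ ≤ D ^ 2 * (M ^ (n - 1 - (m + 1 + 2 * l + 1)) * ε * (‖x‖ ^ (n - 1))⁻¹) := by gcongr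
    _ = _ := by ring

theorem stmt_7
    (n k : ℕ) (hn : 0 < n) (hk : 0 < k) (hnk : 2 * k < n)
    (η : EuclideanSpace ℝ (Fin n) → ℝ)
    (hη_smooth : ContDiff ℝ (⊤ : ℕ∞) η) (hη_supp : HasCompactSupport η) :
    ∀ l : ℕ, l ≤ k - 1 →
      Tendsto
        (fun ε : ℝ =>
          ∫ x : EuclideanSpace ℝ (Fin n),
            ‖iteratedFDeriv ℝ l
                (fun y : EuclideanSpace ℝ (Fin n) =>
                  η y * (ε / (ε ^ 2 + ‖y‖ ^ 2)) ^ (((n : ℝ) - 2 * k) / 2)) x‖ ^ 2)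
        (nhdsWithin 0 (Set.Ioi 0)) (nhds 0) := by
  intro l hl
  have : Nonempty (Fin n) := ⟨⟨0, hn⟩⟩
  obtain ⟨A, R, hA⟩ := exists_pointwise_bound n k hk hnk η hη_smooth hη_supp l hl
  set w : EuclideanSpace ℝ (Fin n) → ℝ := fun x =>
    (Set.Iio R).indicator (fun r : ℝ => (r ^ (n - 1))⁻¹) ‖x‖
  have hw : Integrable w := integrable_indicator_invPow n hn R
  have hlim : Tendsto (fun ε : ℝ => A * ε * ∫ x, w x) (nhdsWithin 0 (Set.Ioi 0)) (nhds 0) := by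
    have : Tendsto (fun ε : ℝ => A * ε * ∫ x, w x) (nhds 0) (nhds (A * 0 * ∫ x, w x)) :=
      Continuous.tendsto (by fun_prop) 0
    rw [mul_zero, zero_mul] at this
    exact this.mono_left nhdsWithin_le_nhds
  refine squeeze_zero' (Eventually.of_forall fun ε => integral_nonneg fun x => sq_nonneg _) ?_ hlim
  filter_upwards [Ioc_mem_nhdsGT (zero_lt_one (α := ℝ))] with ε hε
  rw [← integral_const_mul]
  refine integral_mono_of_nonneg (Eventually.of_forall fun x => sq_nonneg _) (hw.const_mul _) ?_
  -- the origin is excluded because there the dominating function takes the junk value `0⁻¹ = 0`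
  filter_upwards [Measure.ae_ne volume (0 : EuclideanSpace ℝ (Fin n))] with x hx
  exact hA ε hε.1 hε.2 x hx
end
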